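/- Let z_1,…,z_m ∈ ℂ, not all zero, satisfy ∑_{j=1}^m z_j² = 0, and let A ∈ ℝ^{m×2} be the matrix whose j-th row a_j ∈ ℝ² corresponds to z_j under the identification ℝ² ≅ ℂ (so the rows of A form a tight frame). Then the condition number of A satisfies β_A = (1 − (max_{w ∈ ℂ, |w| = 1} ∑_{j=1}^m |Re(z_j²·conj(w))|) / (∑_{j=1}^m |z_j|²))^{−1/2}. -/

import Mathlib

noncomputable section

open Real
open scoped RealInnerProductSpace ENNReal

/-- ℝ² as a Euclidean space. -/
abbrev E2 : Type := EuclideanSpace ℝ (Fin 2)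

/-- The vector `(x, y)` in ℝ². -/
def vec2 (x y : ℝ) : E2 := (WithLp.equiv 2 (Fin 2 → ℝ)).symm ![x, y]

/-- The coordinates of a vector in ℝ². -/
def toFun2 (v : E2) : Fin 2 → ℝ := WithLp.equiv 2 (Fin 2 → ℝ) v

/-- The phaseless measurement map `Φ_A(x) = (|⟨a_j, x⟩|)_j`. -/
def PhiMap {m : ℕ} (a : Fin m → E2) (x : E2) : EuclideanSpace ℝ (Fin m) :=
  (WithLp.equiv 2 (Fin m → ℝ)).symm fun j => |⟪a j, x⟫|

/-- The distance `dist(x,y) = min ‖x − y‖ ‖x + y‖` (real phase retrieval distance). -/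
def pdist (x y : E2) : ℝ := min ‖x - y‖ ‖x + y‖

/-- The set of Lipschitz ratios of the phaseless measurement map. -/
def ratioSet {m : ℕ} (a : Fin m → E2) : Set ℝ :=
  {r | ∃ x y : E2, pdist x y ≠ 0 ∧ r = ‖PhiMap a x - PhiMap a y‖ / pdist x y}

/-- The optimal lower Lipschitz constant `L_A`. -/
def lipL {m : ℕ} (a : Fin m → E2) : ℝ := sInf (ratioSet a)

/-- The optimal upper Lipschitz constant `U_A`. -/
def lipU {m : ℕ} (a : Fin m → E2) : ℝ := sSup (ratioSet a)

/-- The condition number `β_A = U_A / L_A`, with `β_A = +∞` when `L_A = 0`. -/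
def condNum {m : ℕ} (a : Fin m → E2) : ℝ≥0∞ :=
  if lipL a = 0 then ⊤ else ENNReal.ofReal (lipU a / lipL a)

/-- An edge family: nonzero vectors with pairwise distinct directions summing to zero
(the edge vectors of a strictly convex polygon). -/
def IsEdgeFamily {m : ℕ} (e : Fin m → E2) : Prop :=
  (∀ j, e j ≠ 0) ∧
  (∀ i j : Fin m, i ≠ j → ‖e i‖⁻¹ • e i ≠ ‖e j‖⁻¹ • e j) ∧
  ∑ j, e j = 0

/-- The diameter-to-perimeter ratio of the polygon with edge vectors `e`. -/
def rRatio {m : ℕ} (e : Fin m → E2) : ℝ :=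
  sSup {s | ∃ u : E2, ‖u‖ = 1 ∧ s = ∑ j, |⟪e j, u⟫|} / (2 * ∑ j, ‖e j‖)

/-- An optimal edge family: minimizes `rRatio` among all edge families of size `m`. -/
def IsOptimalEdgeFamily {m : ℕ} (e : Fin m → E2) : Prop :=
  IsEdgeFamily e ∧ ∀ e' : Fin m → E2, IsEdgeFamily e' → rRatio e ≤ rRatio e'

/-- The complex square map on ℝ² ≅ ℂ: `f(t·(cos φ, sin φ)) = t²·(cos 2φ, sin 2φ)`. -/
def csq (v : E2) : E2 :=
  vec2 (toFun2 v 0 ^ 2 - toFun2 v 1 ^ 2) (2 * toFun2 v 0 * toFun2 v 1)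

/-- The harmonic frame `E_m`: the `j`-th row is `(cos((j−1)π/m), sin((j−1)π/m))`, `j = 1,…,m`. -/
def harmonicFrame (m : ℕ) : Fin m → E2 :=
  fun j => vec2 (Real.cos ((j : ℕ) * π / m)) (Real.sin ((j : ℕ) * π / m))

/-!
Put `u = x - y` and `v = x + y`. Then `‖Φ_A x - Φ_A y‖² = ∑ min (⟪a_j, u⟫², ⟪a_j, v⟫²)` while
`dist (x, y) = min (‖u‖, ‖v‖)`. Since `⟪z, u⟫² = (‖z‖² ‖u‖² + ⟪z², u²⟫) / 2` in `ℂ`, the condition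
`∑ z_j² = 0` makes the frame tight with constant `S / 2`, where `S = ∑ ‖z_j‖²`; hence
`U_A² = S / 2`, attained at `u = v`. For the lower constant, shrinking the longer of `u`, `v` only
lowers the energy, so one may assume `‖u‖ = ‖v‖`; then the energy is exactly
`S / 2 * ‖u‖² - ∑ |⟪z_j², u² - v²⟫| / 4`. As `‖u² - v²‖ ≤ 2 ‖u‖²`, with equality for `v = i u`,
`L_A² = (S - M) / 2` where `M` is the maximum in the theorem.
-/

section ProjectedLength

variable {ι V : Type*} [Fintype ι] [NormedAddCommGroup V] [InnerProductSpace ℝ V]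

/-- The total length of the orthogonal projections of the vectors `e j` to the line spanned by `w`,
scaled by `‖w‖`. For the edge vectors of a convex polygon and `‖w‖ = 1` it is twice the width of
the polygon in the direction `w`. -/
def projectedLength (e : ι → V) (w : V) : ℝ := ∑ j, |⟪e j, w⟫|

/-- The largest total projected length of the vectors `e j` over all unit directions. -/
def maxProjectedLength (e : ι → V) : ℝ := sSup {s | ∃ w : V, ‖w‖ = 1 ∧ s = projectedLength e w}

lemma projectedLength_smul (e : ι → V) (t : ℝ) (w : V) :
    projectedLength e (t • w) = |t| * projectedLength e w := by
  simp only [projectedLength, real_inner_smul_right, abs_mul, Finset.mul_sum]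

lemma continuous_projectedLength (e : ι → V) : Continuous (projectedLength e) := by
  unfold projectedLength
  fun_prop

lemma projectedLength_le_sum_norm_mul (e : ι → V) (w : V) :
    projectedLength e w ≤ (∑ j, ‖e j‖) * ‖w‖ := by
  rw [projectedLength, Finset.sum_mul]
  exact Finset.sum_le_sum fun j _ => abs_real_inner_le_norm (e j) w

lemma projectedLength_le_maxProjectedLength (e : ι → V) {w : V} (hw : ‖w‖ = 1) :
    projectedLength e w ≤ maxProjectedLength e := by
  refine le_csSup ⟨∑ j, ‖e j‖, ?_⟩ ⟨w, hw, rfl⟩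
  rintro _ ⟨w', hw', rfl⟩
  simpa [hw'] using projectedLength_le_sum_norm_mul e w'

lemma projectedLength_le_maxProjectedLength_mul_norm (e : ι → V) (w : V) :
    projectedLength e w ≤ maxProjectedLength e * ‖w‖ := by
  rcases eq_or_ne w 0 with rfl | hw
  · simp [projectedLength]
  · have hunit := projectedLength_le_maxProjectedLength e (norm_smul_inv_norm (𝕜 := ℝ) hw)
    rw [RCLike.ofReal_real_eq_id, id_eq, projectedLength_smul, abs_inv, abs_norm] at hunit
    rwa [← inv_mul_le_iff₀' (norm_pos_iff.2 hw)]

lemma maxProjectedLength_nonneg (e : ι → V) : 0 ≤ maxProjectedLength e := by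
  refine Real.sSup_nonneg ?_
  rintro _ ⟨w, -, rfl⟩
  exact Finset.sum_nonneg fun j _ => abs_nonneg _

lemma exists_projectedLength_eq_maxProjectedLength [FiniteDimensional ℝ V] [Nontrivial V]
    (e : ι → V) : ∃ w : V, ‖w‖ = 1 ∧ projectedLength e w = maxProjectedLength e := by
  have : ProperSpace V := FiniteDimensional.proper_real V
  obtain ⟨w, hw, hmax⟩ := (isCompact_sphere (0 : V) 1).exists_isMaxOn
    (NormedSpace.sphere_nonempty.2 zero_le_one) (continuous_projectedLength e).continuousOn
  rw [mem_sphere_zero_iff_norm] at hw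
  refine ⟨w, hw, (projectedLength_le_maxProjectedLength e hw).antisymm ?_⟩
  refine csSup_le ⟨_, w, hw, rfl⟩ ?_
  rintro _ ⟨w', hw', rfl⟩
  exact hmax (mem_sphere_zero_iff_norm.2 hw')

end ProjectedLength

section MinEnergy

variable {ι V W : Type*} [Fintype ι] [NormedAddCommGroup V] [InnerProductSpace ℝ V]
  [NormedAddCommGroup W] [InnerProductSpace ℝ W]

/-- The joint frame energy of `u` and `v`, where each measurement vector `a j` contributes only the
smaller of its two responses. At `u = x - y`, `v = x + y` this is the squared distance between the
phaseless measurements of `x` and `y`. -/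
def minEnergy (a : ι → V) (u v : V) : ℝ := ∑ j, min (⟪a j, u⟫ ^ 2) (⟪a j, v⟫ ^ 2)

lemma minEnergy_comm (a : ι → V) (u v : V) : minEnergy a u v = minEnergy a v u := by
  simp only [minEnergy, min_comm]

lemma minEnergy_self (a : ι → V) (u : V) : minEnergy a u u = ∑ j, ⟪a j, u⟫ ^ 2 := by
  simp only [minEnergy, min_self]

lemma minEnergy_le_sum_inner_sq (a : ι → V) (u v : V) :
    minEnergy a u v ≤ ∑ j, ⟪a j, u⟫ ^ 2 :=
  Finset.sum_le_sum fun _ _ => min_le_left _ _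

lemma minEnergy_smul_left_le (a : ι → V) {t : ℝ} (ht : |t| ≤ 1) (u v : V) :
    minEnergy a (t • u) v ≤ minEnergy a u v := by
  refine Finset.sum_le_sum fun j _ => min_le_min_right _ ?_
  rw [real_inner_smul_right, mul_pow]
  exact mul_le_of_le_one_left (sq_nonneg _) ((sq_le_one_iff_abs_le_one t).2 ht)

lemma minEnergy_map (T : V →ₗᵢ[ℝ] W) (a : ι → V) (u v : V) :
    minEnergy (T ∘ a) (T u) (T v) = minEnergy a u v := by
  simp only [minEnergy, Function.comp_apply, T.inner_map_map]

lemma minEnergy_eq_half_sub (a : ι → V) (u v : V) :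
    minEnergy a u v = (∑ j, ⟪a j, u⟫ ^ 2 + ∑ j, ⟪a j, v⟫ ^ 2) / 2 -
      (∑ j, |⟪a j, u⟫ ^ 2 - ⟪a j, v⟫ ^ 2|) / 2 := by
  rw [minEnergy_comm]
  simp only [minEnergy, inf_eq_half_smul_add_sub_abs_sub' ℝ, smul_eq_mul, ← Finset.mul_sum,
    Finset.sum_sub_distrib, Finset.sum_add_distrib]
  ring

lemma mul_min_norm_sq_le_minEnergy {a : ι → V} {c : ℝ}
    (h : ∀ u v, ‖u‖ = ‖v‖ → c * ‖v‖ ^ 2 ≤ minEnergy a u v) (u v : V) :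
    c * min ‖u‖ ‖v‖ ^ 2 ≤ minEnergy a u v := by
  wlog hvu : ‖v‖ ≤ ‖u‖ generalizing u v
  · rw [min_comm, minEnergy_comm]
    exact this v u (le_of_not_ge hvu)
  have hnorm : ‖(‖v‖ / ‖u‖) • u‖ = ‖v‖ := by
    rw [norm_smul, norm_div, norm_norm, norm_norm]
    exact div_mul_cancel_of_imp fun hu => le_antisymm (hu ▸ hvu) (norm_nonneg v)
  have hle : |‖v‖ / ‖u‖| ≤ 1 := by
    rw [abs_div, abs_norm, abs_norm]
    exact div_le_one_of_le₀ hvu (norm_nonneg u)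
  rw [min_eq_right hvu]
  exact (h _ v hnorm).trans (minEnergy_smul_left_le a hle u v)

end MinEnergy

section LipschitzConstants

variable {m : ℕ} {V : Type*} [NormedAddCommGroup V] [InnerProductSpace ℝ V]

lemma abs_sub_abs_sq_eq_min (s t : ℝ) : (|s| - |t|) ^ 2 = min ((s - t) ^ 2) ((s + t) ^ 2) := by
  have hexpand : (|s| - |t|) ^ 2 = s ^ 2 + t ^ 2 - 2 * |s * t| := by
    rw [abs_mul, sub_sq, sq_abs, sq_abs]
    ring
  rcases le_total 0 (s * t) with hst | hst
  · rw [hexpand, abs_of_nonneg hst, min_eq_left (by linarith)]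
    ring
  · rw [hexpand, abs_of_nonpos hst, min_eq_right (by linarith)]
    ring

lemma norm_PhiMap_sub_sq (a : Fin m → E2) (x y : E2) :
    ‖PhiMap a x - PhiMap a y‖ ^ 2 = minEnergy a (x - y) (x + y) := by
  simp [EuclideanSpace.norm_sq_eq, PhiMap, minEnergy, inner_sub_right, inner_add_right,
    abs_sub_abs_sq_eq_min]

lemma mem_ratioSet_iff (a : Fin m → E2) (r : ℝ) :
    r ∈ ratioSet a ↔
      ∃ u v : E2, min ‖u‖ ‖v‖ ≠ 0 ∧ r = √(minEnergy a u v / min ‖u‖ ‖v‖ ^ 2) := by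
  have hratio (x y : E2) : ‖PhiMap a x - PhiMap a y‖ / pdist x y =
      √(minEnergy a (x - y) (x + y) / min ‖x - y‖ ‖x + y‖ ^ 2) := by
    rw [← norm_PhiMap_sub_sq, Real.sqrt_div (sq_nonneg _), Real.sqrt_sq (norm_nonneg _),
      Real.sqrt_sq (by positivity), pdist]
  constructor
  · rintro ⟨x, y, hxy, rfl⟩
    exact ⟨x - y, x + y, hxy, hratio x y⟩
  · rintro ⟨u, v, huv, rfl⟩
    have hsub : (2⁻¹ : ℝ) • (u + v) - (2⁻¹ : ℝ) • (v - u) = u := by module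
    have hadd : (2⁻¹ : ℝ) • (u + v) + (2⁻¹ : ℝ) • (v - u) = v := by module
    refine ⟨(2⁻¹ : ℝ) • (u + v), (2⁻¹ : ℝ) • (v - u), ?_, ?_⟩
    · rwa [pdist, hsub, hadd]
    · rw [hratio, hsub, hadd]

lemma mem_ratioSet_comp_iff (T : V ≃ₗᵢ[ℝ] E2) (a : Fin m → V) (r : ℝ) :
    r ∈ ratioSet (T ∘ a) ↔
      ∃ u v : V, min ‖u‖ ‖v‖ ≠ 0 ∧ r = √(minEnergy a u v / min ‖u‖ ‖v‖ ^ 2) := by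
  simp only [mem_ratioSet_iff, T.surjective.exists, T.norm_map]
  simp only [← T.coe_toLinearIsometry, minEnergy_map]

lemma lipU_comp_eq_sqrt_of_tight (T : V ≃ₗᵢ[ℝ] E2) {a : Fin m → V} {c : ℝ}
    (htight : ∀ u, ∑ j, ⟪a j, u⟫ ^ 2 = c * ‖u‖ ^ 2) : lipU (T ∘ a) = √c := by
  have : Nontrivial V := T.toEquiv.nontrivial
  have hle (u v : V) : minEnergy a u v ≤ c * min ‖u‖ ‖v‖ ^ 2 := by
    rcases min_choice ‖u‖ ‖v‖ with h | h <;> rw [h, ← htight]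
    · exact minEnergy_le_sum_inner_sq a u v
    · exact minEnergy_comm a u v ▸ minEnergy_le_sum_inner_sq a v u
  refine IsGreatest.csSup_eq ⟨?_, fun r hr => ?_⟩
  · obtain ⟨u, hu⟩ := exists_norm_eq V zero_le_one
    refine (mem_ratioSet_comp_iff T a _).2 ⟨u, u, ?_, ?_⟩ <;> simp [minEnergy_self, htight, hu]
  · obtain ⟨u, v, huv, rfl⟩ := (mem_ratioSet_comp_iff T a r).1 hr
    exact Real.sqrt_le_sqrt ((div_le_iff₀ (by positivity)).2 (hle u v))

lemma lipL_comp_eq_sqrt (T : V ≃ₗᵢ[ℝ] E2) {a : Fin m → V} {c : ℝ}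
    (hle : ∀ u v, c * min ‖u‖ ‖v‖ ^ 2 ≤ minEnergy a u v)
    (heq : ∃ u v, ‖u‖ = 1 ∧ ‖v‖ = 1 ∧ minEnergy a u v = c) : lipL (T ∘ a) = √c := by
  refine IsLeast.csInf_eq ⟨?_, fun r hr => ?_⟩
  · obtain ⟨u, v, hu, hv, huv⟩ := heq
    refine (mem_ratioSet_comp_iff T a _).2 ⟨u, v, ?_, ?_⟩ <;> simp [hu, hv, huv]
  · obtain ⟨u, v, huv, rfl⟩ := (mem_ratioSet_comp_iff T a r).1 hr
    exact Real.sqrt_le_sqrt ((le_div_iff₀ (by positivity)).2 (hle u v))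

lemma condNum_eq_rpow_of_eq_sqrt {a : Fin m → E2} {p q : ℝ} (hp : 0 < p) (hU : lipU a = √p)
    (hL : lipL a = √q) : condNum a = ENNReal.ofReal (q / p) ^ (-(1 / 2) : ℝ) := by
  rw [condNum, hU, hL]
  rcases le_or_gt q 0 with hq | hq
  · rw [if_pos (Real.sqrt_eq_zero'.2 hq),
      ENNReal.ofReal_of_nonpos (div_nonpos_of_nonpos_of_nonneg hq hp.le),
      ENNReal.zero_rpow_of_neg (by norm_num)]
  · rw [if_neg (Real.sqrt_pos.2 hq).ne', ← Real.sqrt_div hp.le,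
      ENNReal.ofReal_rpow_of_pos (div_pos hq hp), Real.rpow_neg (div_pos hq hp).le,
      ← Real.sqrt_eq_rpow, ← Real.sqrt_inv, inv_div]

end LipschitzConstants

section ComplexFrames

variable {ι : Type*} [Fintype ι] {z : ι → ℂ}

lemma vec2_re_im_eq_repr (z : ℂ) : vec2 z.re z.im = Complex.orthonormalBasisOneI.repr z := by
  ext j
  fin_cases j <;> simp [vec2]

lemma complex_inner_eq_re_mul_conj (z w : ℂ) : ⟪z, w⟫ = (z * (starRingEnd ℂ) w).re := by
  rw [real_inner_comm, Complex.inner]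

lemma maxProjectedLength_eq_sSup_re (e : ι → ℂ) : maxProjectedLength e =
    sSup {s | ∃ w : ℂ, ‖w‖ = 1 ∧ s = ∑ j, |(e j * (starRingEnd ℂ) w).re|} := by
  simp only [maxProjectedLength, projectedLength, complex_inner_eq_re_mul_conj]

-- The double-angle formula: `2 cos² θ = 1 + cos 2θ`, with `θ` the angle between `z` and `u`.
lemma complex_inner_sq_eq (z u : ℂ) :
    ⟪z, u⟫ ^ 2 = (‖z‖ ^ 2 * ‖u‖ ^ 2 + ⟪z ^ 2, u ^ 2⟫) / 2 := by
  rw [Complex.sq_norm, Complex.sq_norm]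
  simp only [complex_inner_eq_re_mul_conj, Complex.normSq_apply, pow_two, map_mul, Complex.mul_re,
    Complex.mul_im, Complex.conj_re, Complex.conj_im]
  ring

lemma sum_complex_inner_sq_eq (hsq : ∑ j, z j ^ 2 = 0) (u : ℂ) :
    ∑ j, ⟪z j, u⟫ ^ 2 = (∑ j, ‖z j‖ ^ 2) / 2 * ‖u‖ ^ 2 := by
  simp only [complex_inner_sq_eq, ← Finset.sum_div, Finset.sum_add_distrib, ← Finset.sum_mul,
    ← sum_inner, hsq, inner_zero_left]
  ring

lemma minEnergy_eq_of_norm_eq (hsq : ∑ j, z j ^ 2 = 0) {u v : ℂ} (huv : ‖u‖ = ‖v‖) :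
    minEnergy z u v = (∑ j, ‖z j‖ ^ 2) / 2 * ‖v‖ ^ 2 -
      projectedLength (fun j => z j ^ 2) (u ^ 2 - v ^ 2) / 4 := by
  have hdiff (j : ι) : |⟪z j, u⟫ ^ 2 - ⟪z j, v⟫ ^ 2| = |⟪z j ^ 2, u ^ 2 - v ^ 2⟫| / 2 := by
    rw [complex_inner_sq_eq, complex_inner_sq_eq, huv, ← sub_div, add_sub_add_left_eq_sub,
      ← inner_sub_right, abs_div, abs_two]
  simp only [minEnergy_eq_half_sub, sum_complex_inner_sq_eq hsq, hdiff, huv, ← Finset.sum_div,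
    projectedLength]
  ring

lemma mul_min_norm_sq_le_minEnergy_of_sum_sq_eq_zero (hsq : ∑ j, z j ^ 2 = 0) (u v : ℂ) :
    ((∑ j, ‖z j‖ ^ 2) - maxProjectedLength (fun j => z j ^ 2)) / 2 * min ‖u‖ ‖v‖ ^ 2 ≤
      minEnergy z u v := by
  refine mul_min_norm_sq_le_minEnergy (fun u v huv => ?_) u v
  have hnorm : ‖u ^ 2 - v ^ 2‖ ≤ 2 * ‖v‖ ^ 2 := by
    refine (norm_sub_le _ _).trans_eq ?_
    rw [norm_pow, norm_pow, huv, two_mul]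
  have hlength := (projectedLength_le_maxProjectedLength_mul_norm (fun j => z j ^ 2) _).trans
    (mul_le_mul_of_nonneg_left hnorm (maxProjectedLength_nonneg _))
  rw [minEnergy_eq_of_norm_eq hsq huv]
  linarith

lemma exists_minEnergy_eq_of_sum_sq_eq_zero (hsq : ∑ j, z j ^ 2 = 0) :
    ∃ u v : ℂ, ‖u‖ = 1 ∧ ‖v‖ = 1 ∧
      minEnergy z u v = ((∑ j, ‖z j‖ ^ 2) - maxProjectedLength (fun j => z j ^ 2)) / 2 := by
  obtain ⟨w, hw, hmax⟩ := exists_projectedLength_eq_maxProjectedLength (fun j => z j ^ 2)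
  obtain ⟨u, rfl⟩ := IsAlgClosed.exists_pow_nat_eq w two_pos
  have hu : ‖u‖ = 1 := by
    rwa [norm_pow, pow_eq_one_iff_of_nonneg (norm_nonneg u) two_ne_zero] at hw
  have hv : ‖Complex.I * u‖ = 1 := by rw [norm_mul, Complex.norm_I, one_mul, hu]
  have hdiff : u ^ 2 - (Complex.I * u) ^ 2 = (2 : ℝ) • u ^ 2 := by
    rw [mul_pow, Complex.I_sq, Complex.real_smul, Complex.ofReal_ofNat]
    ring
  refine ⟨u, Complex.I * u, hu, hv, ?_⟩
  rw [minEnergy_eq_of_norm_eq hsq (hu.trans hv.symm), hv, hdiff, projectedLength_smul, hmax,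
    abs_two]
  ring

end ComplexFrames

/-- If `z_1,…,z_m ∈ ℂ` are not all zero and `∑ z_j² = 0`, then the matrix
`A ∈ ℝ^{m×2}` whose rows correspond to the `z_j` satisfies
`β_A = (1 − (max_{|w|=1} ∑ |Re(z_j²·conj w)|) / (∑ |z_j|²))^{−1/2}`. -/
theorem stmt5 {m : ℕ} (z : Fin m → ℂ) (hz : ∃ j, z j ≠ 0)
    (hsq : ∑ j, (z j) ^ 2 = 0)
    (a : Fin m → E2) (ha : ∀ j, a j = vec2 (z j).re (z j).im) :
    condNum a =
      ENNReal.ofReal (1 -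
          sSup {s | ∃ w : ℂ, ‖w‖ = 1 ∧ s = ∑ j, |((z j) ^ 2 * (starRingEnd ℂ) w).re|} /
            (∑ j, ‖z j‖ ^ 2)) ^ (-(1 / 2) : ℝ) := by
  have ha' : a = Complex.orthonormalBasisOneI.repr ∘ z :=
    funext fun j => (ha j).trans (vec2_re_im_eq_repr (z j))
  have hS : 0 < ∑ j, ‖z j‖ ^ 2 := by
    obtain ⟨j, hj⟩ := hz
    exact Finset.sum_pos' (fun _ _ => by positivity) ⟨j, Finset.mem_univ j, by positivity⟩
  have hU : lipU a = √((∑ j, ‖z j‖ ^ 2) / 2) :=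
    ha' ▸ lipU_comp_eq_sqrt_of_tight _ (sum_complex_inner_sq_eq hsq)
  have hL : lipL a = √(((∑ j, ‖z j‖ ^ 2) - maxProjectedLength (fun j => z j ^ 2)) / 2) :=
    ha' ▸ lipL_comp_eq_sqrt _ (mul_min_norm_sq_le_minEnergy_of_sum_sq_eq_zero hsq)
      (exists_minEnergy_eq_of_sum_sq_eq_zero hsq)
  rw [← maxProjectedLength_eq_sSup_re (fun j => z j ^ 2),
    condNum_eq_rpow_of_eq_sqrt (half_pos hS) hU hL,
    div_div_div_cancel_right₀ two_ne_zero, sub_div, div_self hS.ne']
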